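/- arXiv:2006.09076 — 2 statements merged into one kernel-verified Lean document; each statement's English description precedes it below -/
import Mathlib

section
/- Transport relation for the duality connected sum: for all nonnegative integers n,m, every nonempty index k, and every (possibly empty) index l, one has Z^D_{n,m}(k_↑; l) = Z^D_{n,m}(k; l_→) as an identity in [0,∞]. -/
open scoped Classical ENNReal

noncomputable section

/-- Last value of a tuple, with default `d` for the empty tuple. -/
def lastD {c : ℕ} (d : ℕ) (f : Fin c → ℕ) : ℕ :=
  if h : 0 < c then f ⟨c - 1, Nat.sub_lt h Nat.one_pos⟩ else d

/-- The duality connected sum `Z^D_{n,m}(k; l)`: the sum in `[0,∞]` of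
`(∏ nᵢ^(-kᵢ)) · (∏ m_j^(-l_j)) · nₐ!·m_b!/(nₐ+m_b)!` over
`n < n₁ < ⋯ < nₐ` and `m < m₁ < ⋯ < m_b` (with `nₐ := n` if `a = 0`,
`m_b := m` if `b = 0`). -/
def ZD (n m : ℕ) (k l : List ℕ) : ℝ≥0∞ :=
  ∑' p : (Fin k.length → ℕ) × (Fin l.length → ℕ),
    Set.indicator
      {p : (Fin k.length → ℕ) × (Fin l.length → ℕ) |
        (∀ i, n < p.1 i) ∧ StrictMono p.1 ∧ (∀ j, m < p.2 j) ∧ StrictMono p.2}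
      (fun p =>
        (∏ i, ((p.1 i : ℝ≥0∞) ^ k.get i)⁻¹) * (∏ j, ((p.2 j : ℝ≥0∞) ^ l.get j)⁻¹) *
          ((Nat.factorial (lastD n p.1) : ℝ≥0∞) * (Nat.factorial (lastD m p.2) : ℝ≥0∞) /
            (Nat.factorial (lastD n p.1 + lastD m p.2) : ℝ≥0∞))) p

/-- `k_↑`: increase the last entry of an index by `1` (`∅_↑ = ∅`). -/
def upLast : List ℕ → List ℕ
  | [] => []
  | k => k.dropLast ++ [k.getLast! + 1]

/-!
Summing out the last variable of each tuple reduces the transport relation to the identity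
`N⁻¹ C(N, M) = ∑_{x > M} x⁻¹ C(N, x)` for the connector `C(N, M) = N! M! / (N + M)!`. This series
telescopes, because `N⁻¹ C(N, x) = (x + 1)⁻¹ C(N, x + 1) + N⁻¹ C(N, x + 1)` and
`N⁻¹ C(N, x) → 0`.
-/

open Filter Topology
open scoped NNReal Nat

theorem tsum_indicator_Ioi_eq_of_eq_add {f g : ℕ → ℝ≥0∞}
    (hstep : ∀ x, f x = g (x + 1) + f (x + 1)) (hf : Tendsto f atTop (𝓝 0)) (M : ℕ) :
    ∑' x, (Set.Ioi M).indicator g x = f M := by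
  set s : ℕ → ℝ≥0∞ := fun j => ∑ x ∈ Finset.range j, (Set.Ioi M).indicator g x
  have partial_sum_add {j : ℕ} (hj : M ≤ j) : s (j + 1) + f j = f M := by
    induction j, hj using Nat.le_induction with
    | base =>
      have : s (M + 1) = 0 := Finset.sum_eq_zero fun x hx =>
        Set.indicator_of_notMem (by simpa using Finset.mem_range_succ_iff.1 hx) g
      rw [this, zero_add]
    | succ j hj ih =>
      have last_term : s (j + 2) = s (j + 1) + g (j + 1) := by
        simp only [s, Finset.sum_range_succ _ (j + 1)]
        rw [Set.indicator_of_mem (Set.mem_Ioi.2 (Nat.lt_succ_of_le hj))]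
      rw [last_term, add_assoc, ← hstep, ih]
  have hs : Tendsto (fun j => s (j + 1) + f j) atTop
      (𝓝 (∑' x, (Set.Ioi M).indicator g x + 0)) :=
    ((ENNReal.tendsto_nat_tsum _).comp (tendsto_add_atTop_nat 1)).add hf
  rw [add_zero] at hs
  exact tendsto_nhds_unique hs <| tendsto_const_nhds.congr' <|
    (eventually_ge_atTop M).mono fun _ hj => (partial_sum_add hj).symm

/-- The factor `N! M! / (N + M)!` linking the last variables of the two tuples in the duality
connected sum. It is valued in `ℝ≥0`, where field identities can be normalized, and coerced to
`ℝ≥0∞` when summed. -/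
def dualityConnector (N M : ℕ) : ℝ≥0 := N ! * M ! / (N + M)!

theorem coe_dualityConnector (N M : ℕ) :
    (dualityConnector N M : ℝ≥0∞) = N ! * M ! / (N + M)! := by
  rw [dualityConnector, ENNReal.coe_div (by positivity)]
  norm_cast

theorem inv_mul_dualityConnector {N : ℕ} (hN : N ≠ 0) (x : ℕ) :
    (N : ℝ≥0)⁻¹ * dualityConnector N x =
      ((x + 1 : ℕ) : ℝ≥0)⁻¹ * dualityConnector N (x + 1) +
        (N : ℝ≥0)⁻¹ * dualityConnector N (x + 1) := by
  simp only [dualityConnector, ← add_assoc, Nat.factorial_succ]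
  push_cast
  field_simp
  ring

theorem inv_mul_dualityConnector_le {N : ℕ} (hN : N ≠ 0) (x : ℕ) :
    (N : ℝ≥0)⁻¹ * dualityConnector N x ≤ ((x + 1 : ℕ) : ℝ≥0)⁻¹ := by
  obtain ⟨N, rfl⟩ := Nat.exists_eq_succ_of_ne_zero hN
  have factorial_le : N ! * (x + 1)! ≤ (N + (x + 1))! :=
    Nat.le_of_dvd (Nat.factorial_pos _) (Nat.factorial_mul_factorial_dvd_factorial_add N (x + 1))
  calc ((N + 1 : ℕ) : ℝ≥0)⁻¹ * dualityConnector (N + 1) x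
      = ((x + 1 : ℕ) : ℝ≥0)⁻¹ * ((N ! * (x + 1)! : ℕ) / (N + (x + 1))!) := by
        rw [dualityConnector, add_right_comm, add_assoc]
        simp only [Nat.factorial_succ N, Nat.factorial_succ x]
        push_cast
        field_simp
    _ ≤ ((x + 1 : ℕ) : ℝ≥0)⁻¹ :=
        mul_le_of_le_one_right' (div_le_one_of_le₀ (by exact_mod_cast factorial_le) (by simp))

theorem tsum_inv_mul_dualityConnector {N : ℕ} (hN : N ≠ 0) (M : ℕ) :
    ∑' x, (Set.Ioi M).indicator (fun x : ℕ => (x : ℝ≥0∞)⁻¹ * dualityConnector N x) x =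
      (N : ℝ≥0∞)⁻¹ * dualityConnector N M := by
  have coe_term {a : ℕ} (ha : a ≠ 0) (x : ℕ) :
      (a : ℝ≥0∞)⁻¹ * dualityConnector N x = ((a : ℝ≥0)⁻¹ * dualityConnector N x : ℝ≥0) := by
    rw [ENNReal.coe_mul, ENNReal.coe_inv (by simpa), ENNReal.coe_natCast]
  refine tsum_indicator_Ioi_eq_of_eq_add
    (f := fun x => (N : ℝ≥0∞)⁻¹ * dualityConnector N x) (fun x => ?_) ?_ M
  · simp only [coe_term hN, coe_term x.succ_ne_zero]
    exact_mod_cast inv_mul_dualityConnector hN x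
  · simp only [coe_term hN]
    have hinv : Tendsto (fun x : ℕ => ((x + 1 : ℕ) : ℝ≥0)⁻¹) atTop (𝓝 0) :=
      tendsto_inv_atTop_nhds_zero_nat.comp (tendsto_add_atTop_nat 1)
    exact ENNReal.tendsto_coe.2 <| tendsto_of_tendsto_of_tendsto_of_le_of_le tendsto_const_nhds
      hinv (fun _ => zero_le) (inv_mul_dualityConnector_le hN)

/-- The tuples `d < f 0 < ⋯ < f (c - 1)` over which multiple harmonic sums range. -/
def increasingTuples (d c : ℕ) : Set (Fin c → ℕ) :=
  {f | (∀ i, d < f i) ∧ StrictMono f}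

section Tuples

variable {c : ℕ} (d : ℕ)

theorem lastD_eq_cons_last (f : Fin c → ℕ) :
    lastD d f = (Fin.cons d f : Fin (c + 1) → ℕ) (Fin.last c) := by
  cases c <;> rfl

theorem lastD_snoc (f : Fin c → ℕ) (x : ℕ) :
    lastD d (Fin.snoc f x : Fin (c + 1) → ℕ) = x := by
  rw [lastD_eq_cons_last, Fin.cons_snoc_eq_snoc_cons, Fin.snoc_last]

theorem strictMono_snoc_iff {α : Type*} [Preorder α] (f : Fin (c + 1) → α) (x : α) :
    StrictMono (Fin.snoc f x : Fin (c + 2) → α) ↔ StrictMono f ∧ f (Fin.last c) < x := by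
  rw [← Fin.insertNth_last', Fin.strictMono_insertNth_iff]
  refine and_congr_right fun hf => ⟨fun h => h.1 _ (Fin.castSucc_lt_last _), fun h => ⟨?_, ?_⟩⟩
  · exact fun i _ => (hf.monotone (Fin.le_last i)).trans_lt h
  · exact fun i hi => absurd (Fin.castSucc_lt_last i) hi.not_gt

theorem snoc_mem_increasingTuples (f : Fin c → ℕ) (x : ℕ) :
    (Fin.snoc f x : Fin (c + 1) → ℕ) ∈ increasingTuples d (c + 1) ↔
      f ∈ increasingTuples d c ∧ x ∈ Set.Ioi (lastD d f) := by
  simp only [increasingTuples, Set.mem_ofPred_eq, ← Fin.strictMono_cons]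
  rw [Fin.cons_snoc_eq_snoc_cons, strictMono_snoc_iff, lastD_eq_cons_last, Set.mem_Ioi]

end Tuples

/-- The multiple harmonic sum `∑_{d < n₁ < ⋯ < n_c} F(n_c) ∏ nᵢ^(-kᵢ)`, where `n_c := d` if
`c = 0`. The weight `F` on the last variable lets the sum be taken one variable at a time, and
lets two such sums be coupled through a connector. -/
def multipleHarmonicSum (d : ℕ) {c : ℕ} (k : Fin c → ℕ) (F : ℕ → ℝ≥0∞) : ℝ≥0∞ :=
  ∑' f : Fin c → ℕ, (increasingTuples d c).indicator
    (fun f => (∏ i, ((f i : ℝ≥0∞) ^ k i)⁻¹) * F (lastD d f)) f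

section MultipleHarmonicSum

variable (d : ℕ)

theorem multipleHarmonicSum_const_mul {c : ℕ} (k : Fin c → ℕ) (a : ℝ≥0∞) (F : ℕ → ℝ≥0∞) :
    multipleHarmonicSum d k (fun N => a * F N) = a * multipleHarmonicSum d k F := by
  simp only [multipleHarmonicSum, ← ENNReal.tsum_mul_left, ← Set.indicator_const_mul,
    mul_left_comm a]

theorem multipleHarmonicSum_snoc {c : ℕ} (k : Fin c → ℕ) (r : ℕ) (F : ℕ → ℝ≥0∞) :
    multipleHarmonicSum d (Fin.snoc k r : Fin (c + 1) → ℕ) F =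
      multipleHarmonicSum d k fun N =>
        ∑' x, (Set.Ioi N).indicator (fun x : ℕ => ((x : ℝ≥0∞) ^ r)⁻¹ * F x) x := by
  rw [multipleHarmonicSum, ← (Fin.snocEquiv fun _ => ℕ).tsum_eq, ENNReal.tsum_prod',
    ENNReal.tsum_comm]
  refine tsum_congr fun f => ?_
  have snocEquiv_apply (x : ℕ) :
      Fin.snocEquiv (fun _ => ℕ) (x, f) = (Fin.snoc f x : Fin (c + 1) → ℕ) := rfl
  simp only [snocEquiv_apply, Set.indicator_apply, snoc_mem_increasingTuples, lastD_snoc,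
    Fin.prod_univ_castSucc, Fin.snoc_castSucc, Fin.snoc_last]
  by_cases hf : f ∈ increasingTuples d c
  · simp only [hf, true_and, if_true, ← ENNReal.tsum_mul_left, mul_ite, mul_zero, mul_assoc]
  · simp [hf]

theorem multipleHarmonicSum_get_ofFn {c : ℕ} (k : Fin c → ℕ) (F : ℕ → ℝ≥0∞) :
    multipleHarmonicSum d (List.ofFn k).get F = multipleHarmonicSum d k F :=
  congrArg (fun s : Σ c, Fin c → ℕ => multipleHarmonicSum d s.2 F)
    (List.equivSigmaTuple.apply_symm_apply ⟨c, k⟩)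

theorem multipleHarmonicSum_get_append_singleton (k : List ℕ) (r : ℕ) (F : ℕ → ℝ≥0∞) :
    multipleHarmonicSum d (k ++ [r]).get F =
      multipleHarmonicSum d k.get fun N =>
        ∑' x, (Set.Ioi N).indicator (fun x : ℕ => ((x : ℝ≥0∞) ^ r)⁻¹ * F x) x := by
  have ofFn_snoc : k ++ [r] = List.ofFn (Fin.snoc k.get r : Fin (k.length + 1) → ℕ) := by
    rw [List.ofFn_succ']
    simp
  rw [ofFn_snoc, multipleHarmonicSum_get_ofFn, multipleHarmonicSum_snoc]

end MultipleHarmonicSum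

theorem ZD_eq_multipleHarmonicSum (n m : ℕ) (k l : List ℕ) :
    ZD n m k l = multipleHarmonicSum n k.get fun N =>
      multipleHarmonicSum m l.get fun M => dualityConnector N M := by
  rw [ZD, ENNReal.tsum_prod', multipleHarmonicSum]
  refine tsum_congr fun f => ?_
  by_cases hf : f ∈ increasingTuples n k.length
  · rw [Set.indicator_of_mem hf, multipleHarmonicSum, ← ENNReal.tsum_mul_left]
    refine tsum_congr fun g => ?_
    simp only [Set.indicator_apply, Set.mem_ofPred_eq, ← and_assoc, coe_dualityConnector,
      increasingTuples, mul_ite, mul_zero, mul_assoc]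
    simp [hf.1, hf.2]
  · rw [Set.indicator_of_notMem hf, ENNReal.tsum_eq_zero]
    exact fun g => Set.indicator_of_notMem (fun h => hf ⟨h.1, h.2.1⟩) _

theorem multipleHarmonicSum_append_one_dualityConnector (m : ℕ) (l : List ℕ) {N : ℕ}
    (hN : N ≠ 0) :
    multipleHarmonicSum m (l ++ [1]).get (fun M => dualityConnector N M) =
      (N : ℝ≥0∞)⁻¹ * multipleHarmonicSum m l.get fun M => dualityConnector N M := by
  simp only [multipleHarmonicSum_get_append_singleton, pow_one,
    tsum_inv_mul_dualityConnector hN, multipleHarmonicSum_const_mul]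

theorem ZD_append_succ (n m : ℕ) (k l : List ℕ) (r : ℕ) :
    ZD n m (k ++ [r + 1]) l = ZD n m (k ++ [r]) (l ++ [1]) := by
  simp only [ZD_eq_multipleHarmonicSum, multipleHarmonicSum_get_append_singleton n k]
  refine congrArg _ <| funext fun N₀ => tsum_congr fun N => ?_
  refine congrFun (Set.indicator_congr fun N (hN : N₀ < N) => ?_) N
  rw [multipleHarmonicSum_append_one_dualityConnector m l (Nat.ne_zero_of_lt hN), pow_succ,
    ENNReal.mul_inv (by simp) (by simp), mul_assoc]

theorem upLast_append_singleton (k : List ℕ) (r : ℕ) : upLast (k ++ [r]) = k ++ [r + 1] := by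
  rw [upLast]
  · simp [List.getLast!_eq_getLast?_getD]
  · simp

/-- **Transport relation for the duality connected sum:**
`Z^D_{n,m}(k_↑; l) = Z^D_{n,m}(k; l_→)` in `[0,∞]`, for all `n, m ≥ 0`,
every nonempty index `k` and every (possibly empty) index `l`; here `l_→ = l ++ [1]`. -/
theorem ZD_transport_up (n m : ℕ) (k l : List ℕ)
    (hk : k ≠ []) (hk1 : ∀ i ∈ k, 1 ≤ i) (hl1 : ∀ i ∈ l, 1 ≤ i) :
    ZD n m (upLast k) l = ZD n m k (l ++ [1]) := by
  obtain ⟨k, r, rfl⟩ := List.eq_nil_or_concat' k |>.resolve_left hk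
  rw [upLast_append_singleton, ZD_append_succ]
end
end

section
/- Transport relation for the Hoffman-duality connected sum: for all nonempty indices k, l and every positive integer N, one has Z^HD_N(k_→; l) = Z^HD_N(k; ↑l). -/
open scoped Classical

noncomputable section

/-- First value of a tuple, with default `d` for the empty tuple. -/
def headD {c : ℕ} (d : ℕ) (f : Fin c → ℕ) : ℕ :=
  if h : 0 < c then f ⟨0, h⟩ else d

/-- The Hoffman-duality connected sum `Z^HD_N(k; l)`: the sum of
`(-1)^(nₐ-1) · binom(m₁, nₐ) · (∏_{i<a} nᵢ^(-kᵢ)) · nₐ^(-(kₐ-1)) · ∏_j m_j^(-l_j)`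
over `1 ≤ n₁ ≤ ⋯ ≤ nₐ ≤ m₁ ≤ ⋯ ≤ m_b ≤ N` (with `m₁ := N` when `b = 0`). -/
def ZHD (N : ℕ) (k l : List ℕ) : ℚ :=
  ∑ p ∈ Finset.univ.filter
      (fun p : (Fin k.length → Fin (N + 1)) × (Fin l.length → Fin (N + 1)) =>
        (∀ i, 1 ≤ (p.1 i : ℕ)) ∧ Monotone p.1 ∧ Monotone p.2 ∧
          lastD 0 (fun i => (p.1 i : ℕ)) ≤ headD N (fun j => (p.2 j : ℕ))),
    (-1 : ℚ) ^ (lastD 0 (fun i => (p.1 i : ℕ)) - 1) *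
      (Nat.choose (headD N fun j => (p.2 j : ℕ)) (lastD 0 fun i => (p.1 i : ℕ)) : ℚ) *
      (∏ i, (((p.1 i : ℕ) : ℚ) ^
          (if i.1 = k.length - 1 then k.get i - 1 else k.get i))⁻¹) *
      ∏ j, (((p.2 j : ℕ) : ℚ) ^ l.get j)⁻¹

/-- `↑k`: increase the first entry of an index by `1` (`↑∅ = ∅`). -/
def upFirst : List ℕ → List ℕ
  | [] => []
  | a :: k => (a + 1) :: k

/-!
Both connected sums are nested star sums coupled through the kernel
`C(n, m) = (-1)^(n-1) · binom(m, n)`. A trailing `1` in the left index cancels against the shifted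
exponent of the last variable in `ZHD`, so that variable `x` occurs only in the kernel and ranges
over `x ≥ n`, where `n` is the variable before it. By the telescoping identity
`C(x, m) = (x / m) · C(x, m) - ((x + 1) / m) · C(x + 1, m)`, summing it out gives
`∑_{x ≥ n} C(x, m) = (n / m) · C(n, m)`: the factor `n` lowers the last exponent of `k` and
the factor `1 / m` raises the first exponent of `l`.
-/

/-- The kernel `(-1)^(n-1) · binom(m, n)` coupling the last variable `n = nₐ` of the left index to
the first variable `m = m₁` of the right one. It vanishes for `m < n`, so the condition `nₐ ≤ m₁`
need not be imposed separately. Only `n ≥ 1` is meaningful: at `n = 0` the exponent truncates. -/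
def hoffmanConnector (n m : ℕ) : ℚ :=
  (-1) ^ (n - 1) * m.choose n

theorem hoffmanConnector_eq_zero {n m : ℕ} (h : m < n) : hoffmanConnector n m = 0 := by
  simp [hoffmanConnector, Nat.choose_eq_zero_of_lt h]

theorem div_mul_hoffmanConnector_succ (n m : ℕ) :
    ((n + 1 : ℕ) : ℚ) / (m + 1 : ℕ) * hoffmanConnector (n + 1) (m + 1) =
      (-1) ^ n * m.choose n := by
  have absorption : ((m + 1 : ℕ) : ℚ) * m.choose n = (m + 1).choose (n + 1) * (n + 1 : ℕ) :=
    mod_cast Nat.add_one_mul_choose_eq m n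
  have hm : ((m + 1 : ℕ) : ℚ) ≠ 0 := by positivity
  rw [hoffmanConnector, Nat.add_sub_cancel, div_mul_eq_mul_div, div_eq_iff hm]
  linear_combination -(-1) ^ n * absorption

theorem hoffmanConnector_eq_sub {n : ℕ} (hn : n ≠ 0) (m : ℕ) :
    hoffmanConnector n m =
      n / m * hoffmanConnector n m - (n + 1 : ℕ) / m * hoffmanConnector (n + 1) m := by
  obtain ⟨n, rfl⟩ := Nat.exists_eq_succ_of_ne_zero hn
  cases m with
  | zero => simp [hoffmanConnector]
  | succ m =>
    rw [div_mul_hoffmanConnector_succ, div_mul_hoffmanConnector_succ, hoffmanConnector,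
      Nat.choose_succ_succ, Nat.succ_sub_one]
    push_cast
    ring

theorem sum_Ico_hoffmanConnector {n m M : ℕ} (hn : n ≠ 0) (hm : m < M) :
    ∑ x ∈ Finset.Ico n M, hoffmanConnector x m = n / m * hoffmanConnector n m := by
  obtain hnM | hMn := le_total n M
  · have telescope := Finset.sum_Ico_sub (fun x : ℕ ↦ -(x / m * hoffmanConnector x m)) hnM
    rw [hoffmanConnector_eq_zero hm, mul_zero, neg_zero, zero_sub, neg_neg] at telescope
    rw [← telescope]
    refine Finset.sum_congr rfl fun x hx ↦ ?_
    have hx0 : x ≠ 0 := by grind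
    linear_combination hoffmanConnector_eq_sub hx0 m
  · rw [Finset.Ico_eq_empty_of_le hMn, Finset.sum_empty,
      hoffmanConnector_eq_zero (hm.trans_le hMn), mul_zero]

theorem sum_Ici_hoffmanConnector {N : ℕ} {n m : Fin (N + 1)} (hn : (n : ℕ) ≠ 0) :
    ∑ x ∈ Finset.Ici n, hoffmanConnector x m = (n : ℕ) / (m : ℕ) * hoffmanConnector n m := by
  rw [← sum_Ico_hoffmanConnector hn m.isLt, ← Fin.map_valEmbedding_Ici, Finset.sum_map]
  rfl

theorem monotone_snoc {α : Type*} [Preorder α] {a : ℕ} {n : Fin (a + 1) → α} {x : α} :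
    Monotone (Fin.snoc n x : Fin (a + 2) → α) ↔ Monotone n ∧ n (Fin.last a) ≤ x := by
  simp only [Fin.monotone_iff_le_succ, Fin.forall_fin_succ' (n := a), Fin.succ_castSucc,
    Fin.snoc_castSucc, Fin.succ_last, Fin.snoc_last]

theorem ofFn_snoc {α : Type*} {a : ℕ} (f : Fin a → α) (x : α) :
    List.ofFn (Fin.snoc f x : Fin (a + 1) → α) = List.ofFn f ++ [x] := by
  simp only [List.ofFn_succ', Fin.snoc_castSucc, Fin.snoc_last, List.concat_eq_append]

theorem headD_succ {c : ℕ} (d : ℕ) (f : Fin (c + 1) → ℕ) : headD d f = f 0 := by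
  simp [headD]

theorem lastD_succ {c : ℕ} (d : ℕ) (f : Fin (c + 1) → ℕ) : lastD d f = f (Fin.last c) := by
  simp [lastD, Fin.last]

/-- The multiple harmonic star sum of exponents `k`, truncated at `N`, with an additional weight
`F`: the sum of `∏ᵢ nᵢ^(-kᵢ) · F(n₁, …, nₐ)` over `1 ≤ n₁ ≤ ⋯ ≤ nₐ ≤ N`. -/
def starSum (N : ℕ) {a : ℕ} (k : Fin a → ℕ) (F : (Fin a → Fin (N + 1)) → ℚ) : ℚ :=
  ∑ n : Fin a → Fin (N + 1) with (∀ i, 1 ≤ (n i : ℕ)) ∧ Monotone n,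
    (∏ i, (((n i : ℕ) : ℚ) ^ k i)⁻¹) * F n

section starSum

variable {N a : ℕ}

theorem starSum_congr {k : Fin a → ℕ} {F G : (Fin a → Fin (N + 1)) → ℚ}
    (h : ∀ n, (∀ i, 1 ≤ (n i : ℕ)) → Monotone n → F n = G n) :
    starSum N k F = starSum N k G := by
  refine Finset.sum_congr rfl fun n hn ↦ ?_
  obtain ⟨-, hpos, hmono⟩ := Finset.mem_filter.1 hn
  rw [h n hpos hmono]

theorem starSum_const_mul (k : Fin a → ℕ) (c : ℚ) (F : (Fin a → Fin (N + 1)) → ℚ) :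
    starSum N k (fun n ↦ c * F n) = c * starSum N k F := by
  simp only [starSum, Finset.mul_sum, mul_left_comm]

theorem starSum_sum {ι : Type*} (k : Fin a → ℕ) (s : Finset ι)
    (F : ι → (Fin a → Fin (N + 1)) → ℚ) :
    starSum N k (fun n ↦ ∑ x ∈ s, F x n) = ∑ x ∈ s, starSum N k (F x) := by
  simp only [starSum, Finset.mul_sum]
  exact Finset.sum_comm

theorem starSum_update_succ (k : Fin a → ℕ) (i : Fin a) (r : ℕ)
    (F : (Fin a → Fin (N + 1)) → ℚ) :
    starSum N (Function.update k i (r + 1)) F =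
      starSum N (Function.update k i r) fun n ↦ F n / (n i : ℕ) := by
  refine Finset.sum_congr rfl fun n _ ↦ ?_
  rw [← Finset.mul_prod_erase _ _ (Finset.mem_univ i),
    ← Finset.mul_prod_erase _ (fun j ↦ (_ ^ Function.update k i r j)⁻¹) (Finset.mem_univ i)]
  have others : ∀ j ∈ Finset.univ.erase i,
      (((n j : ℕ) : ℚ) ^ Function.update k i (r + 1) j)⁻¹ =
        (((n j : ℕ) : ℚ) ^ Function.update k i r j)⁻¹ := by
    intro j hj
    simp only [Function.update_of_ne (Finset.ne_of_mem_erase hj)]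
  rw [Finset.prod_congr rfl others, Function.update_self, Function.update_self, pow_succ, mul_inv]
  ring

theorem starSum_snoc_succ (k : Fin a → ℕ) (s : ℕ) (F : (Fin (a + 1) → Fin (N + 1)) → ℚ) :
    starSum N (Fin.snoc k (s + 1) : Fin (a + 1) → ℕ) F =
      starSum N (Fin.snoc k s : Fin (a + 1) → ℕ) fun n ↦ F n / (n (Fin.last a) : ℕ) := by
  simpa only [Fin.update_snoc_last] using
    starSum_update_succ (Fin.snoc k s : Fin (a + 1) → ℕ) (Fin.last a) s F

theorem starSum_cons_succ (k : Fin a → ℕ) (s : ℕ) (F : (Fin (a + 1) → Fin (N + 1)) → ℚ) :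
    starSum N (Fin.cons (s + 1) k : Fin (a + 1) → ℕ) F =
      starSum N (Fin.cons s k : Fin (a + 1) → ℕ) fun n ↦ F n / (n 0 : ℕ) := by
  simpa only [Fin.update_cons_zero] using
    starSum_update_succ (Fin.cons s k : Fin (a + 1) → ℕ) 0 s F

theorem starSum_snoc (k : Fin (a + 1) → ℕ) (s : ℕ) (F : (Fin (a + 2) → Fin (N + 1)) → ℚ) :
    starSum N (Fin.snoc k s : Fin (a + 2) → ℕ) F =
      starSum N k fun n ↦
        ∑ x ∈ Finset.Ici (n (Fin.last a)), (((x : ℕ) : ℚ) ^ s)⁻¹ * F (Fin.snoc n x) := by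
  have domain : ∀ (n : Fin (a + 1) → Fin (N + 1)) (x : Fin (N + 1)),
      ((∀ i, 1 ≤ ((Fin.snoc n x : Fin (a + 2) → Fin (N + 1)) i : ℕ)) ∧
          Monotone (Fin.snoc n x : Fin (a + 2) → Fin (N + 1))) ↔
        ((∀ i, 1 ≤ (n i : ℕ)) ∧ Monotone n) ∧ n (Fin.last a) ≤ x := by
    intro n x
    simp only [Fin.forall_fin_succ' (n := a + 1), Fin.snoc_castSucc, Fin.snoc_last, monotone_snoc]
    exact ⟨by tauto, fun h ↦ ⟨⟨h.1.1, (h.1.1 _).trans h.2⟩, h.1.2, h.2⟩⟩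
  simp only [starSum]
  rw [Finset.sum_filter, ← (Fin.snocEquiv fun _ ↦ Fin (N + 1)).sum_comp,
    Fintype.sum_prod_type_right, Finset.sum_filter]
  refine Finset.sum_congr rfl fun n _ ↦ ?_
  simp only [Fin.snocEquiv, Equiv.coe_fn_mk, domain, ite_and, Fin.prod_univ_castSucc (n := a + 1),
    Fin.snoc_castSucc, Fin.snoc_last]
  split_ifs
  · rw [← Finset.sum_filter, Finset.filter_le_eq_Ici, Finset.mul_sum]
    simp only [mul_assoc]
  all_goals exact Finset.sum_const_zero

end starSum

theorem ZHD_append_singleton_succ (N : ℕ) {a : ℕ} (k : Fin a → ℕ) (s t : ℕ) (l : List ℕ) :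
    ZHD N (List.ofFn k ++ [s + 1]) (t :: l) =
      starSum N (Fin.snoc k s : Fin (a + 1) → ℕ) fun n ↦
        starSum N (Fin.cons t l.get : Fin (l.length + 1) → ℕ) fun m ↦
          hoffmanConnector (n (Fin.last a)) (m 0) := by
  -- As a `cons`, the left list has a length that reduces to a successor, as `lastD_succ` requires.
  generalize hK : List.ofFn k ++ [s + 1] = K
  obtain ⟨y, K, rfl⟩ := List.exists_cons_of_ne_nil (l := K) (by rintro rfl; simp at hK)
  obtain rfl : K.length = a := by simpa using congrArg List.length hK.symm
  have exponent : ∀ i : Fin (K.length + 1),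
      (if i.1 = K.length then (y :: K).get i - 1 else (y :: K).get i) =
        (Fin.snoc k s : Fin (K.length + 1) → ℕ) i := by
    intro i
    rw [List.get_eq_getElem, List.getElem_of_eq hK.symm]
    cases i using Fin.lastCases <;> simp [Nat.ne_of_lt]
  have cons_get : (Fin.cons t l.get : Fin (l.length + 1) → ℕ) = (t :: l).get :=
    Fin.cons_self_tail (n := l.length) (t :: l).get
  simp only [starSum, Finset.mul_sum, ← Finset.sum_product', ZHD, lastD_succ, headD_succ,
    List.length_cons, Nat.add_sub_cancel, exponent, cons_get]
  refine Finset.sum_subset_zero_on_sdiff ?_ ?_ ?_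
  · rintro ⟨n, m⟩ h
    obtain ⟨-, hn_pos, hn, hm, hnm⟩ := Finset.mem_filter.1 h
    have hm_pos : ∀ j, 1 ≤ (m j : ℕ) := fun j ↦
      ((hn_pos (Fin.last K.length)).trans hnm).trans (hm (Fin.zero_le j))
    simpa using ⟨⟨hn_pos, hn⟩, hm_pos, hm⟩
  · rintro ⟨n, m⟩ h
    simp only [Finset.mem_sdiff, Finset.mem_product, Finset.mem_filter_univ] at h
    obtain ⟨⟨⟨hn_pos, hn⟩, -, hm⟩, hnot⟩ := h
    have hmn : (m 0 : ℕ) < n (Fin.last K.length) :=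
      not_le.1 fun hnm ↦ hnot ⟨hn_pos, hn, hm, hnm⟩
    rw [hoffmanConnector_eq_zero hmn, mul_zero, mul_zero]
  · rintro ⟨n, m⟩ -
    rw [hoffmanConnector]
    ring

theorem ZHD_transport_arrow_general (N : ℕ) (k : List ℕ) (s t : ℕ) (l : List ℕ) :
    ZHD N (k ++ [s + 1, 1]) (t :: l) = ZHD N (k ++ [s + 1]) ((t + 1) :: l) := by
  let left (r : ℕ) : Fin (k.length + 1) → ℕ := Fin.snoc k.get r
  let right (r : ℕ) : Fin (l.length + 1) → ℕ := Fin.cons r l.get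
  have hk : k ++ [s + 1, 1] = List.ofFn (left (s + 1)) ++ [0 + 1] := by
    simp only [left, ofFn_snoc, List.ofFn_get, List.append_assoc, List.singleton_append, zero_add]
  calc ZHD N (k ++ [s + 1, 1]) (t :: l)
    _ = starSum N (Fin.snoc (left (s + 1)) 0 : Fin (k.length + 2) → ℕ) fun n ↦
          starSum N (right t) fun m ↦ hoffmanConnector (n (Fin.last _)) (m 0) := by
      rw [hk, ZHD_append_singleton_succ]
    _ = starSum N (left (s + 1)) fun n ↦ starSum N (right t) fun m ↦
          ∑ x ∈ Finset.Ici (n (Fin.last _)), hoffmanConnector x (m 0) := by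
      simp only [starSum_snoc, starSum_sum, Fin.snoc_last, pow_zero, inv_one, one_mul]
    _ = starSum N (left (s + 1)) fun n ↦ (n (Fin.last _) : ℕ) *
          starSum N (right t) fun m ↦ hoffmanConnector (n (Fin.last _)) (m 0) / (m 0 : ℕ) := by
      refine starSum_congr fun n hn _ ↦ ?_
      rw [← starSum_const_mul]
      refine starSum_congr fun m _ _ ↦ ?_
      rw [sum_Ici_hoffmanConnector (Nat.one_le_iff_ne_zero.1 (hn _))]
      ring
    _ = starSum N (left s) fun n ↦
          starSum N (right (t + 1)) fun m ↦ hoffmanConnector (n (Fin.last _)) (m 0) := by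
      simp only [left, right, starSum_snoc_succ, starSum_cons_succ]
      refine starSum_congr fun n hn _ ↦ mul_div_cancel_left₀ _ ?_
      exact Nat.cast_ne_zero.2 (Nat.one_le_iff_ne_zero.1 (hn _))
    _ = ZHD N (k ++ [s + 1]) ((t + 1) :: l) := by
      rw [← ZHD_append_singleton_succ, List.ofFn_get]

/-- **Transport relation for the Hoffman-duality connected sum:**
`Z^HD_N(k_→; l) = Z^HD_N(k; ↑l)` for all nonempty indices `k`, `l` and every `N ≥ 1`;
here `k_→ = k ++ [1]`. -/
theorem ZHD_transport_arrow (N : ℕ) (hN : 0 < N) (k l : List ℕ)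
    (hk : k ≠ []) (hk1 : ∀ i ∈ k, 1 ≤ i)
    (hl : l ≠ []) (hl1 : ∀ i ∈ l, 1 ≤ i) :
    ZHD N (k ++ [1]) l = ZHD N k (upFirst l) := by
  obtain ⟨t, l, rfl⟩ := List.exists_cons_of_ne_nil hl
  obtain ⟨k, r, rfl⟩ := (List.eq_nil_or_concat' k).resolve_left hk
  obtain ⟨s, rfl⟩ := Nat.exists_eq_add_of_le' (hk1 r (by simp))
  simpa [upFirst] using ZHD_transport_arrow_general N k s t l
end
end
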